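/- arXiv:2002.00260 — 7 statements merged into one kernel-verified Lean document; each statement's English description precedes it below -/
import Mathlib

section
/- Under Assumptions 1, 2 and 3, suppose in addition ‖x(t)‖_v ≤ x̄ almost surely for all t. Then almost surely, for every t ≥ τ, ‖φ(t)‖_v ≤ 2ε̄ Σ_{k=t−τ+1}^{t} α_{k−1}, where ε̄ = 2x̄ + C + w̄/v̲. -/
/-!
After division by `v` the weighted norm is the sup norm. One step of the scheme changes a single
coordinate, so it moves the iterate by at most `α_t ‖F(x) - x + w‖_v ≤ α_t ε̄`, and the triangle
inequality sums these moves over the window from `t - τ` to `t`. The nonexpansive `F` at most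
doubles the displacement, and the diagonal entries of `e_{i_t} e_{i_t}ᵀ - D_t`, being differences of
two numbers in `[0, 1]`, do not enlarge it.
-/

open MeasureTheory Finset

/-- Weighted infinity norm `‖x‖_v = max_i |x_i| / v_i`. -/
noncomputable def vnorm {n : ℕ} (v x : Fin n → ℝ) : ℝ := ⨆ i, |x i| / v i

section WeightedNorm

variable {n : ℕ} {v : Fin n → ℝ}

lemma vnorm_eq_norm_inv_mul (hv : ∀ i, 0 < v i) (x : Fin n → ℝ) : vnorm v x = ‖v⁻¹ * x‖ := by
  have hcoord (i : Fin n) : ‖(v⁻¹ * x) i‖ = |x i| / v i := by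
    rw [Pi.mul_apply, Pi.inv_apply, Real.norm_eq_abs, inv_mul_eq_div, abs_div, abs_of_pos (hv i)]
  refine le_antisymm (Real.iSup_le (fun i => ?_) (norm_nonneg _)) ?_
  · exact (hcoord i).ge.trans (norm_le_pi_norm (v⁻¹ * x) i)
  · refine (pi_norm_le_iff_of_nonneg
      (Real.iSup_nonneg fun i => div_nonneg (abs_nonneg _) (hv i).le)).2 fun i => ?_
    exact (hcoord i).le.trans
      (le_ciSup (f := fun i => |x i| / v i) (Set.finite_range _).bddAbove i)

lemma vnorm_nonneg (hv : ∀ i, 0 < v i) (x : Fin n → ℝ) : 0 ≤ vnorm v x := by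
  rw [vnorm_eq_norm_inv_mul hv]
  exact norm_nonneg _

lemma vnorm_le_vnorm (hv : ∀ i, 0 < v i) {x y : Fin n → ℝ} (h : ∀ i, |x i| ≤ |y i|) :
    vnorm v x ≤ vnorm v y :=
  ciSup_mono (Set.finite_range _).bddAbove fun i => div_le_div_of_nonneg_right (h i) (hv i).le

lemma vnorm_add_le (hv : ∀ i, 0 < v i) (x y : Fin n → ℝ) :
    vnorm v (x + y) ≤ vnorm v x + vnorm v y := by
  simpa only [vnorm_eq_norm_inv_mul hv, mul_add] using norm_add_le (v⁻¹ * x) (v⁻¹ * y)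

lemma vnorm_sub_le (hv : ∀ i, 0 < v i) (x y : Fin n → ℝ) :
    vnorm v (x - y) ≤ vnorm v x + vnorm v y := by
  simpa only [vnorm_eq_norm_inv_mul hv, mul_sub] using norm_sub_le (v⁻¹ * x) (v⁻¹ * y)

lemma vnorm_smul (hv : ∀ i, 0 < v i) (c : ℝ) (x : Fin n → ℝ) :
    vnorm v (c • x) = |c| * vnorm v x := by
  rw [vnorm_eq_norm_inv_mul hv, vnorm_eq_norm_inv_mul hv, mul_smul_comm, norm_smul,
    Real.norm_eq_abs]

lemma vnorm_const_le (hv : ∀ i, 0 < v i) (c : ℝ) :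
    vnorm v (fun _ => c) ≤ |c| / ⨅ i, v i := by
  refine Real.iSup_le (fun i => ?_)
    (div_nonneg (abs_nonneg c) (Real.iInf_nonneg fun i => (hv i).le))
  have : Nonempty (Fin n) := ⟨i⟩
  obtain ⟨j, hj⟩ := exists_eq_ciInf_of_finite (f := v)
  exact div_le_div_of_nonneg_left (abs_nonneg c) (hj ▸ hv j)
    (ciInf_le (Set.finite_range v).bddBelow i)

lemma vnorm_sub_le_sum_Ico (hv : ∀ i, 0 < v i) {x : ℕ → Fin n → ℝ} {b : ℕ → ℝ}
    (h : ∀ k, vnorm v (x (k + 1) - x k) ≤ b k) {s t : ℕ} (hst : s ≤ t) :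
    vnorm v (x t - x s) ≤ ∑ k ∈ Ico s t, b k := by
  simp only [vnorm_eq_norm_inv_mul hv, mul_sub, ← dist_eq_norm] at h ⊢
  rw [dist_comm]
  exact dist_le_Ico_sum_of_dist_le (f := fun k => v⁻¹ * x k) hst fun _ _ =>
    (dist_comm _ _).trans_le (h _)

lemma vnorm_sub_add_const_le (hv : ∀ i, 0 < v i) {x y : Fin n → ℝ} {γ C B w W : ℝ} (hγ : γ ≤ 1)
    (hy : vnorm v y ≤ γ * vnorm v x + C) (hx : vnorm v x ≤ B) (hw : |w| ≤ W) :
    vnorm v (y - x + fun _ => w) ≤ 2 * B + C + W / ⨅ i, v i := by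
  have hy' : vnorm v y ≤ B + C := by
    linarith [mul_le_of_le_one_left (vnorm_nonneg hv x) hγ]
  have hw' : vnorm v (fun _ => w) ≤ W / ⨅ i, v i :=
    (vnorm_const_le hv w).trans
      (div_le_div_of_nonneg_right hw (Real.iInf_nonneg fun i => (hv i).le))
  linarith [vnorm_add_le hv (y - x) fun _ => w, vnorm_sub_le hv y x]

lemma vnorm_coordinate_update_sub_le (hv : ∀ i, 0 < v i) {x x' g : Fin n → ℝ} {j : Fin n} {a : ℝ}
    (ha : 0 ≤ a) (h : ∀ i, x' i = if i = j then x i + a * g i else x i) :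
    vnorm v (x' - x) ≤ a * vnorm v g := by
  have hcoord (i : Fin n) : |(x' - x) i| ≤ |(a • g) i| := by
    rw [Pi.sub_apply, Pi.smul_apply, smul_eq_mul, h]
    split_ifs
    · rw [add_sub_cancel_left]
    · rw [sub_self, abs_zero]
      exact abs_nonneg _
  calc vnorm v (x' - x) ≤ vnorm v (a • g) := vnorm_le_vnorm hv hcoord
    _ = a * vnorm v g := by rw [vnorm_smul hv, abs_of_nonneg ha]

lemma vnorm_coordinate_updates_sub_le (hv : ∀ i, 0 < v i) {x g : ℕ → Fin n → ℝ} {j : ℕ → Fin n}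
    {α : ℕ → ℝ} {ε : ℝ} (hα : ∀ k, 0 ≤ α k)
    (hx : ∀ k i, x (k + 1) i = if i = j k then x k i + α k * g k i else x k i)
    (hg : ∀ k, vnorm v (g k) ≤ ε) {s t : ℕ} (hst : s ≤ t) :
    vnorm v (x t - x s) ≤ ε * ∑ k ∈ Ico s t, α k := by
  rw [mul_comm, sum_mul]
  exact vnorm_sub_le_sum_Ico hv (fun k => (vnorm_coordinate_update_sub_le hv (hα k) (hx k)).trans
    (mul_le_mul_of_nonneg_left (hg k) (hα k))) hst

lemma vnorm_sub_le_two_mul (hv : ∀ i, 0 < v i) {x y : Fin n → ℝ} {γ : ℝ} (hγ : γ ≤ 1)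
    (hxy : vnorm v x ≤ γ * vnorm v y) : vnorm v (x - y) ≤ 2 * vnorm v y := by
  linarith [vnorm_sub_le hv x y, mul_le_of_le_one_left (vnorm_nonneg hv y) hγ]

end WeightedNorm

lemma abs_ite_sub_mul_le (p : Prop) [Decidable p] {d : ℝ} (hd : d ∈ Set.Icc 0 1) (z : ℝ) :
    |((if p then (1 : ℝ) else 0) - d) * z| ≤ |z| := by
  rw [abs_mul]
  refine mul_le_of_le_one_left (abs_nonneg z) (abs_sub_le_of_nonneg_of_le ?_ ?_ hd.1 hd.2) <;>
    split_ifs <;> norm_num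

lemma condExp_mem_Icc {Ω : Type*} {m m0 : MeasurableSpace Ω} {μ : Measure Ω} {f : Ω → ℝ} {R : ℝ}
    (hf : ∀ᵐ ω ∂μ, f ω ∈ Set.Icc 0 R) : ∀ᵐ ω ∂μ, μ[f | m] ω ∈ Set.Icc 0 R := by
  have hnonneg : 0 ≤ᵐ[μ] μ[f | m] := condExp_nonneg (hf.mono fun _ h => h.1)
  have habs : ∀ᵐ ω ∂μ, |μ[f | m] ω| ≤ R :=
    ae_bdd_abs_condExp_of_ae_bdd_abs (hf.mono fun _ h => (abs_of_nonneg h.1).trans_le h.2)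
  filter_upwards [hnonneg, habs] with ω h0 hR using ⟨h0, (le_abs_self _).trans hR⟩

lemma sum_Icc_add_one_comp_sub_one {M : Type*} [AddCommMonoid M] (f : ℕ → M) (s t : ℕ) :
    ∑ k ∈ Icc (s + 1) t, f (k - 1) = ∑ k ∈ Ico s t, f k := by
  rw [← Ico_add_one_right_eq_Icc, sum_Ico_add_right_sub_eq]

theorem SA_phi_bounded_general
    {Ω : Type*} {m0 : MeasurableSpace Ω} (μ : Measure Ω)
    {n : ℕ} {v : Fin n → ℝ} (hv : ∀ i, 0 < v i)
    {F : (Fin n → ℝ) → (Fin n → ℝ)} {γ C : ℝ} (hγ : γ ≤ 1)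
    (hF : ∀ x y, vnorm v (F x - F y) ≤ γ * vnorm v (x - y))
    (hFbd : ∀ x, vnorm v (F x) ≤ γ * vnorm v x + C)
    {idx : ℕ → Ω → Fin n} {w : ℕ → Ω → ℝ} {wbar : ℝ}
    {α : ℕ → ℝ} (hα : ∀ t, 0 ≤ α t) {X : ℕ → Ω → Fin n → ℝ}
    (hupd : ∀ t ω i, X (t + 1) ω i =
      if i = idx t ω then X t ω i + α t * (F (X t ω) i - X t ω i + w t ω) else X t ω i)
    (hw_bd : ∀ t, ∀ᵐ ω ∂μ, |w t ω| ≤ wbar)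
    {d : ℕ → Fin n → Ω → ℝ} (hd : ∀ t i, ∀ᵐ ω ∂μ, d t i ω ∈ Set.Icc 0 1)
    {xbar : ℝ} (hXbd : ∀ t, ∀ᵐ ω ∂μ, vnorm v (X t ω) ≤ xbar)
    {s : ℕ → ℕ} (hs : ∀ t, s t ≤ t) {phi : ℕ → Ω → Fin n → ℝ}
    (hphi : ∀ t ω i, phi t ω i =
      ((if idx t ω = i then (1 : ℝ) else 0) - d t i ω) *
        (F (X t ω) i - F (X (s t) ω) i - (X t ω i - X (s t) ω i))) :
    ∀ᵐ ω ∂μ, ∀ t, vnorm v (phi t ω) ≤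
      2 * (2 * xbar + C + wbar / ⨅ i, v i) * ∑ k ∈ Ico (s t) t, α k := by
  filter_upwards [ae_all_iff.2 hw_bd, ae_all_iff.2 fun t => ae_all_iff.2 (hd t),
    ae_all_iff.2 hXbd] with ω hwω hdω hXω t
  have hinnovation (k : ℕ) := vnorm_sub_add_const_le hv hγ (hFbd (X k ω)) (hXω k) (hwω k)
  have hmove := vnorm_coordinate_updates_sub_le hv (x := fun k => X k ω) hα
    (fun k => hupd k ω) hinnovation (hs t)
  calc vnorm v (phi t ω)
      ≤ vnorm v (F (X t ω) - F (X (s t) ω) - (X t ω - X (s t) ω)) :=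
        vnorm_le_vnorm hv fun i => hphi t ω i ▸ abs_ite_sub_mul_le _ (hdω t i) _
    _ ≤ 2 * vnorm v (X t ω - X (s t) ω) := vnorm_sub_le_two_mul hv hγ (hF _ _)
    _ ≤ 2 * ((2 * xbar + C + wbar / ⨅ i, v i) * ∑ k ∈ Ico (s t) t, α k) := by gcongr
    _ = 2 * (2 * xbar + C + wbar / ⨅ i, v i) * ∑ k ∈ Ico (s t) t, α k := (mul_assoc _ _ _).symm

/-- **Lemma 2(b).** Under Assumptions 1, 2 and 3 and the almost-sure bound `‖x(t)‖_v ≤ x̄`,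
the term `φ(t) = (e_{i_t}e_{i_t}ᵀ - D_t)[F(x(t)) - F(x(t-τ)) - (x(t) - x(t-τ))]` satisfies
`‖φ(t)‖_v ≤ 2ε̄ Σ_{k=t-τ+1}^t α_{k-1}` almost surely, for every `t ≥ τ`,
where `ε̄ = 2x̄ + C + w̄/v̲`. -/
theorem SA_phi_bounded
    {Ω : Type*} {m0 : MeasurableSpace Ω} (μ : Measure Ω) [IsProbabilityMeasure μ]
    (ℱ : Filtration ℕ m0)
    (n : ℕ) (hn : 0 < n) (v : Fin n → ℝ) (hv : ∀ i, 0 < v i)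
    -- Assumption 1 (contraction)
    (F : (Fin n → ℝ) → (Fin n → ℝ)) (γ C : ℝ) (hγ0 : 0 < γ) (hγ1 : γ < 1) (hC : 0 < C)
    (hcontr : ∀ x y, vnorm v (F x - F y) ≤ γ * vnorm v (x - y))
    (hFbd : ∀ x, vnorm v (F x) ≤ γ * vnorm v x + C)
    (xstar : Fin n → ℝ) (hfix : F xstar = xstar)
    -- the asynchronous SA scheme
    (idx : ℕ → Ω → Fin n) (hidx : ∀ t, Measurable[ℱ t] (idx t))
    (w : ℕ → Ω → ℝ) (wbar : ℝ)
    (α : ℕ → ℝ) (hα : ∀ t, α t ∈ Set.Ioc (0 : ℝ) 1)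
    (X : ℕ → Ω → Fin n → ℝ) (hX0 : ∀ ω, X 0 ω = 0)
    (hupd : ∀ t ω i, X (t + 1) ω i =
      if i = idx t ω then X t ω i + α t * (F (X t ω) i - X t ω i + w t ω) else X t ω i)
    -- Assumption 2 (martingale difference noise)
    (hw_meas : ∀ t, Measurable[ℱ (t + 1)] (w t))
    (hw_mean : ∀ t, μ[w t | ℱ t] =ᵐ[μ] 0)
    (hw_bd : ∀ t, ∀ᵐ ω ∂μ, |w t ω| ≤ wbar)
    -- Assumption 3 (sufficient exploration), with `d_{t,i} = P(i_t = i | ℱ_{t-τ})`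
    (sg : ℝ) (τ : ℕ) (hsg0 : 0 < sg) (hsg1 : sg < 1) (hτ : 0 < τ)
    (d : ℕ → Fin n → Ω → ℝ)
    (hd : ∀ t i, d t i = μ[(fun ω => if idx t ω = i then (1 : ℝ) else 0) | ℱ (t - τ)])
    (hexpl : ∀ (i : Fin n) (t : ℕ), τ ≤ t → ∀ᵐ ω ∂μ, sg ≤ d t i ω)
    -- almost sure boundedness of the iterates
    (xbar : ℝ) (hXbd : ∀ t, ∀ᵐ ω ∂μ, vnorm v (X t ω) ≤ xbar)
    -- the drift vector `φ(t)`
    (phi : ℕ → Ω → Fin n → ℝ)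
    (hphi : ∀ t ω i, phi t ω i =
      ((if idx t ω = i then (1 : ℝ) else 0) - d t i ω) *
        (F (X t ω) i - F (X (t - τ) ω) i - (X t ω i - X (t - τ) ω i))) :
    ∀ t, τ ≤ t → ∀ᵐ ω ∂μ,
      vnorm v (phi t ω) ≤
        2 * (2 * xbar + C + wbar / ⨅ i, v i) * ∑ k ∈ Finset.Icc (t - τ + 1) t, α (k - 1) := by
  have hd01 (t i) : ∀ᵐ ω ∂μ, d t i ω ∈ Set.Icc 0 1 :=
    hd t i ▸ condExp_mem_Icc (ae_of_all μ fun ω => by split_ifs <;> simp)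
  intro t _
  rw [sum_Icc_add_one_comp_sub_one]
  exact ae_all_iff.1 (SA_phi_bounded_general μ hv hγ1.le hcontr hFbd (fun t => (hα t).1.le)
    hupd hw_bd hd01 hXbd (Nat.sub_le · τ) hphi) t
end

section
/- For all integers 0 ≤ k ≤ t: β_{k,t} ≤ (h/(k+t0)) · ((k+1+t0)/(t+1+t0))^{σh}, and β̃_{k,t} ≤ ((k+1+t0)/(t+1+t0))^{σh}. -/
open Finset

/-!
With `c = σh` and `x = ℓ + t₀`, each factor satisfies
`1 - c / x ≤ exp (-(1 / x)) ^ c ≤ (x / (x + 1)) ^ c`, since `1 + 1 / x ≤ exp (1 / x)`.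
The factors are nonnegative, so these bounds may be multiplied over `ℓ = k + 1, …, t`, and
the bases `x / (x + 1)` telescope.
-/

theorem prod_Ico_div_succ_of_ne_zero {G : Type*} [CommGroupWithZero G] {f : ℕ → G} {m n : ℕ}
    (hmn : m ≤ n) (hf : ∀ i ∈ Icc m n, f i ≠ 0) :
    ∏ i ∈ Ico m n, f i / f (i + 1) = f m / f n := by
  induction n, hmn using Nat.le_induction with
  | base => simp [hf m (by simp)]
  | succ n hmn ih =>
    have hfn : f n ≠ 0 := hf n (mem_Icc.2 ⟨hmn, n.le_succ⟩)
    rw [prod_Ico_succ_top hmn, ih fun i hi ↦ hf i (Icc_subset_Icc_right n.le_succ hi),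
      div_mul_div_cancel₀ hfn]

theorem exp_neg_one_div_le_div_add_one {x : ℝ} (hx : 0 < x) :
    Real.exp (-(1 / x)) ≤ x / (x + 1) := by
  calc Real.exp (-(1 / x)) = (Real.exp (1 / x))⁻¹ := Real.exp_neg _
    _ ≤ (1 / x + 1)⁻¹ := by gcongr; exact Real.add_one_le_exp _
    _ = x / (x + 1) := by rw [div_add_one hx.ne', inv_div, add_comm 1 x]

theorem one_sub_div_le_div_add_one_rpow {c x : ℝ} (hc : 0 ≤ c) (hx : 0 < x) :
    1 - c / x ≤ (x / (x + 1)) ^ c := by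
  calc 1 - c / x ≤ Real.exp (-(c / x)) := Real.one_sub_le_exp_neg _
    _ = Real.exp (-(1 / x)) ^ c := by rw [← Real.exp_mul]; congr 1; ring
    _ ≤ (x / (x + 1)) ^ c := by gcongr; exact exp_neg_one_div_le_div_add_one hx

theorem prod_Ico_one_sub_div_le_rpow {a c : ℝ} {m n : ℕ} (hmn : m ≤ n) (hc : 0 ≤ c)
    (hma : 0 < m + a) (hcm : c ≤ m + a) :
    ∏ i ∈ Ico m n, (1 - c / (i + a)) ≤ ((m + a) / (n + a)) ^ c := by
  have cast_add_le_cast_add {i : ℕ} (hi : m ≤ i) : m + a ≤ i + a := by gcongr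
  have cast_add_pos {i : ℕ} (hi : m ≤ i) : 0 < i + a := hma.trans_le (cast_add_le_cast_add hi)
  have factor_nonneg : ∀ i ∈ Ico m n, 0 ≤ 1 - c / (i + a) := fun i hi ↦
    have hmi := (mem_Ico.1 hi).1
    sub_nonneg.2 ((div_le_one (cast_add_pos hmi)).2 (hcm.trans (cast_add_le_cast_add hmi)))
  have factor_le : ∀ i ∈ Ico m n, 1 - c / (i + a) ≤ ((i + a) / ((i + 1 : ℕ) + a)) ^ c :=
    fun i hi ↦ by
      simpa only [Nat.cast_succ, add_right_comm] using
        one_sub_div_le_div_add_one_rpow hc (cast_add_pos (mem_Ico.1 hi).1)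
  have base_nonneg : ∀ i ∈ Ico m n, 0 ≤ (i + a) / ((i + 1 : ℕ) + a) := fun i hi ↦
    have hmi := (mem_Ico.1 hi).1
    (div_pos (cast_add_pos hmi) (cast_add_pos (hmi.trans i.le_succ))).le
  calc ∏ i ∈ Ico m n, (1 - c / (i + a))
      ≤ ∏ i ∈ Ico m n, ((i + a) / ((i + 1 : ℕ) + a)) ^ c := prod_le_prod factor_nonneg factor_le
    _ = (∏ i ∈ Ico m n, (i + a) / ((i + 1 : ℕ) + a)) ^ c := Real.finsetProd_rpow _ _ base_nonneg c
    _ = ((m + a) / (n + a)) ^ c := by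
      rw [prod_Ico_div_succ_of_ne_zero (f := fun i : ℕ ↦ (i : ℝ) + a) hmn
        fun i hi ↦ (cast_add_pos (mem_Icc.1 hi).1).ne']

theorem stepsize_beta_bounds_general {sg h t0 : ℝ} (hsg : 0 ≤ sg) (hh : 0 ≤ h) (ht0 : 0 < t0)
    (hle : sg * h ≤ t0 + 1) {α : ℕ → ℝ} (hα : ∀ t, α t = h / (t + t0)) {k t : ℕ} (hkt : k ≤ t) :
    α k * ∏ ℓ ∈ Icc (k + 1) t, (1 - sg * α ℓ) ≤
        h / (k + t0) * ((k + 1 + t0) / (t + 1 + t0)) ^ (sg * h) ∧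
      ∏ ℓ ∈ Icc (k + 1) t, (1 - sg * α ℓ) ≤ ((k + 1 + t0) / (t + 1 + t0)) ^ (sg * h) := by
  have le_base : sg * h ≤ (k + 1 : ℕ) + t0 := by
    push_cast
    linarith [k.cast_nonneg (α := ℝ)]
  have prod_le : ∏ ℓ ∈ Icc (k + 1) t, (1 - sg * α ℓ) ≤
      ((k + 1 + t0) / (t + 1 + t0)) ^ (sg * h) := by
    simpa only [hα, mul_div_assoc, Nat.cast_succ, Ico_add_one_right_eq_Icc] using
      prod_Ico_one_sub_div_le_rpow (Nat.add_le_add_right hkt 1) (mul_nonneg hsg hh)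
        (by positivity) le_base
  refine ⟨?_, prod_le⟩
  rw [hα k]
  gcongr

/-- **Lemma 3(a).** For step sizes `α_t = h/(t+t₀)` with `h > 2/σ` and `t₀ ≥ max(4h, τ)`,
the quantities `β_{k,t} = α_k ∏_{ℓ=k+1}^t (1-σα_ℓ)` and `β̃_{k,t} = ∏_{ℓ=k+1}^t (1-σα_ℓ)`
satisfy `β_{k,t} ≤ (h/(k+t₀))·((k+1+t₀)/(t+1+t₀))^{σh}` and
`β̃_{k,t} ≤ ((k+1+t₀)/(t+1+t₀))^{σh}` for all `0 ≤ k ≤ t`. -/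
theorem stepsize_beta_bounds
    (sg : ℝ) (hsg0 : 0 < sg) (hsg1 : sg < 1)
    (τ : ℕ) (hτ : 0 < τ)
    (h t0 : ℝ) (hh : 2 / sg < h) (ht0 : max (4 * h) (τ : ℝ) ≤ t0)
    (α : ℕ → ℝ) (hα : ∀ t, α t = h / ((t : ℝ) + t0)) :
    ∀ k t : ℕ, k ≤ t →
      (α k * ∏ ℓ ∈ Finset.Icc (k + 1) t, (1 - sg * α ℓ) ≤
        (h / ((k : ℝ) + t0)) * (((k : ℝ) + 1 + t0) / ((t : ℝ) + 1 + t0)) ^ (sg * h)) ∧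
      (∏ ℓ ∈ Finset.Icc (k + 1) t, (1 - sg * α ℓ) ≤
        (((k : ℝ) + 1 + t0) / ((t : ℝ) + 1 + t0)) ^ (sg * h)) := by
  have hh0 : 0 < h := (div_pos two_pos hsg0).trans hh
  have h4 : 4 * h ≤ t0 := (le_max_left _ _).trans ht0
  exact fun k t hkt ↦
    stepsize_beta_bounds_general hsg0.le hh0.le (by linarith) (by nlinarith) hα hkt
end

section
/- For every integer t ≥ 1: Σ_{k=1}^{t} β_{k,t}² ≤ (2h/σ) · 1/(t+1+t0). -/
open Finset

/-!
Write `S t` for the sum. Raising `t` by one multiplies each old weight by `1 - σ α_{t+1}` and adds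
the new weight `α_{t+1}`, so `S (t+1) = (1 - σ α_{t+1})² S t + α_{t+1}²` with `S 0 = 0`. With
`s = σ h` and `u = t + 1 + t₀` one has `σ α_{t+1} = s / u`, and the bound, in the form
`σ² S t ≤ 2s/u`, propagates to `t + 1` as soon as `1/(u+1) ≤ (s/u)(3/2 - s/u)`, which holds for
`1 ≤ s ≤ u`.
-/

/-- The weight `β_{k,t} = α_k ∏_{ℓ=k+1}^t (1 - σ α_ℓ)` that the step `k` of a step-size sequence `α`
retains at time `t` when every later step contracts by `1 - σ α_ℓ`. The product is empty, so that
the weight is `α_k`, when `t ≤ k`. -/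
def stepsizeBeta {R : Type*} [CommRing R] (σ : R) (α : ℕ → R) (k t : ℕ) : R :=
  α k * ∏ ℓ ∈ Icc (k + 1) t, (1 - σ * α ℓ)

section CommRing

variable {R : Type*} [CommRing R] (σ : R) (α : ℕ → R)

lemma stepsizeBeta_self (k : ℕ) : stepsizeBeta σ α k k = α k := by
  simp [stepsizeBeta]

lemma stepsizeBeta_succ {k t : ℕ} (hkt : k ≤ t) :
    stepsizeBeta σ α k (t + 1) = (1 - σ * α (t + 1)) * stepsizeBeta σ α k t := by
  rw [stepsizeBeta, stepsizeBeta, prod_Icc_succ_top (Nat.succ_le_succ hkt)]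
  ring

lemma sum_stepsizeBeta_pow_succ {m t : ℕ} (hmt : m ≤ t + 1) (p : ℕ) :
    ∑ k ∈ Icc m (t + 1), stepsizeBeta σ α k (t + 1) ^ p =
      (1 - σ * α (t + 1)) ^ p * ∑ k ∈ Icc m t, stepsizeBeta σ α k t ^ p + α (t + 1) ^ p := by
  rw [sum_Icc_succ_top hmt, stepsizeBeta_self, mul_sum]
  congr 1
  refine sum_congr rfl fun k hk ↦ ?_
  rw [stepsizeBeta_succ σ α (mem_Icc.mp hk).2, mul_pow]

end CommRing

section OrderedField

variable {K : Type*} [Field K] [LinearOrder K] [IsStrictOrderedRing K]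

lemma one_div_add_one_le_div_mul_three_halves_sub {s u : K} (hs : 1 ≤ s) (hsu : s ≤ u) :
    1 / (u + 1) ≤ s / u * (3 / 2 - s / u) := by
  have hu : 0 < u := by linarith
  have gap_eq : s * (3 * u - 2 * s) * (u + 1) - 2 * u ^ 2 =
      2 * (u + 1) * ((s - 1) * (u - s)) + s * u * (u - 1) + 2 * (u - s) := by ring
  have gap_nonneg : 0 ≤ s * (3 * u - 2 * s) * (u + 1) - 2 * u ^ 2 := by
    have : 0 ≤ s - 1 := sub_nonneg.mpr hs
    have : 0 ≤ u - s := sub_nonneg.mpr hsu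
    have : 0 ≤ u - 1 := sub_nonneg.mpr (hs.trans hsu)
    rw [gap_eq]
    positivity
  have clear_denominators : s / u * (3 / 2 - s / u) = s * (3 * u - 2 * s) / (2 * u ^ 2) := by
    field_simp
  rw [clear_denominators, div_le_div_iff₀ (by positivity) (by positivity), one_mul]
  exact sub_nonneg.mp gap_nonneg

lemma one_sub_div_sq_mul_add_div_sq_le {s u : K} (hs : 1 ≤ s) (hsu : s ≤ u) :
    (1 - s / u) ^ 2 * (2 * s / u) + (s / u) ^ 2 ≤ 2 * s / (u + 1) := by
  have hu : 0 < u := by linarith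
  calc (1 - s / u) ^ 2 * (2 * s / u) + (s / u) ^ 2
      = 2 * s / u * (1 - s / u * (3 / 2 - s / u)) := by ring
    _ ≤ 2 * s / u * (1 - 1 / (u + 1)) := by
        gcongr
        exact one_div_add_one_le_div_mul_three_halves_sub hs hsu
    _ = 2 * s / (u + 1) := by field_simp; ring

theorem stepsize_beta_sq_sum_bound_general {σ h t₀ : K} (hσh : 1 ≤ σ * h) (ht₀ : σ * h ≤ t₀ + 1)
    {α : ℕ → K} (hα : ∀ t, α t = h / (t + t₀)) (t : ℕ) :
    ∑ k ∈ Icc 1 t, stepsizeBeta σ α k t ^ 2 ≤ 2 * h / σ * (1 / (t + 1 + t₀)) := by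
  have hσ : σ ≠ 0 := by rintro rfl; linarith
  have bound_eq (u : K) : 2 * h / σ * (1 / u) = 2 * (σ * h) / u / σ ^ 2 := by field_simp
  rw [bound_eq]
  induction t with
  | zero =>
    simp only [zero_lt_one, Icc_eq_empty_of_lt, sum_empty, Nat.cast_zero, zero_add]
    exact div_nonneg (div_nonneg (by linarith) (by linarith)) (sq_nonneg σ)
  | succ t ih =>
    set u : K := t + 1 + t₀
    have hsu : σ * h ≤ u := by linarith [t.cast_nonneg (α := K)]
    have hα_succ : α (t + 1) = h / u := by rw [hα, Nat.cast_add_one]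
    have hu_succ : ((t + 1 : ℕ) : K) + 1 + t₀ = u + 1 := by push_cast; ring
    rw [sum_stepsizeBeta_pow_succ σ α (Nat.le_add_left 1 t), hα_succ, hu_succ]
    calc (1 - σ * (h / u)) ^ 2 * ∑ k ∈ Icc 1 t, stepsizeBeta σ α k t ^ 2 + (h / u) ^ 2
        ≤ (1 - σ * (h / u)) ^ 2 * (2 * (σ * h) / u / σ ^ 2) + (h / u) ^ 2 := by gcongr
      _ = ((1 - σ * h / u) ^ 2 * (2 * (σ * h) / u) + (σ * h / u) ^ 2) / σ ^ 2 := by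
          field_simp
      _ ≤ 2 * (σ * h) / (u + 1) / σ ^ 2 := by
          gcongr
          exact one_sub_div_sq_mul_add_div_sq_le hσh hsu

end OrderedField

/-- **Lemma 3(b).** For step sizes `α_t = h/(t+t₀)` with `h > 2/σ` and `t₀ ≥ max(4h, τ)`,
the quantities `β_{k,t} = α_k ∏_{ℓ=k+1}^t (1-σα_ℓ)` satisfy
`Σ_{k=1}^t β_{k,t}² ≤ (2h/σ)·1/(t+1+t₀)` for every `t ≥ 1`. -/
theorem stepsize_beta_sq_sum_bound
    (sg : ℝ) (hsg0 : 0 < sg) (hsg1 : sg < 1)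
    (τ : ℕ) (hτ : 0 < τ)
    (h t0 : ℝ) (hh : 2 / sg < h) (ht0 : max (4 * h) (τ : ℝ) ≤ t0)
    (α : ℕ → ℝ) (hα : ∀ t, α t = h / ((t : ℝ) + t0)) :
    ∀ t : ℕ, 1 ≤ t →
      ∑ k ∈ Finset.Icc 1 t, (α k * ∏ ℓ ∈ Finset.Icc (k + 1) t, (1 - sg * α ℓ)) ^ 2 ≤
        (2 * h / sg) * (1 / ((t : ℝ) + 1 + t0)) := by
  have h_pos : 0 < h := (div_pos two_pos hsg0).trans hh
  have two_lt : 2 < sg * h := (div_lt_iff₀' hsg0).mp hh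
  have le_t0 : sg * h ≤ t0 + 1 := by
    linarith [mul_lt_of_lt_one_left h_pos hsg1, (le_max_left (4 * h) (τ : ℝ)).trans ht0]
  exact fun t _ ↦ stepsize_beta_sq_sum_bound_general (one_le_two.trans two_lt.le) le_t0 hα t
end

section
/- For every integer t ≥ τ: Σ_{k=τ}^{t} β_{k,t} · Σ_{ℓ=k−τ+1}^{k} α_{ℓ−1} ≤ (8hτ/σ) · 1/(t+1+t0). -/
open Finset

/-!
With `x = n + t₀`, the `τ` step sizes in the window before `n` are each at most `2h / x`, since
`x ≥ 2τ`. Hence the weighted sum `S` is subject to the recursion `S ← (1 - σh / x) S + d / x²` of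
Chung's lemma, as an inequality with `d = 2h²τ`. Since `1 / x - 1 / (x + 1) ≤ 1 / x²`, the profile
`K / x` is a supersolution of this recursion as soon as `K + d ≤ σhK`, and then `S` never exceeds
it. The least such constant is `K = d / (σh - 1)`, which is at most `8hτ / σ` when `σh > 2`.
-/

/-- The sum is the solution, started at `0`, of the recursion that `u` supersolves. -/
theorem sum_Ico_mul_prod_Ico_le_of_supersolution {R : Type*} [CommRing R] [PartialOrder R]
    [IsOrderedRing R] {u b c : ℕ → R} {m n : ℕ} (hum : 0 ≤ u m)
    (hu : ∀ k ≥ m, c k * u k + b k ≤ u (k + 1)) (hc : ∀ k ≥ m, 0 ≤ c k) (hmn : m ≤ n) :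
    ∑ k ∈ Ico m n, b k * ∏ i ∈ Ico (k + 1) n, c i ≤ u n := by
  have hneg : ∀ k ≥ m, -u (k + 1) ≤ c k * -u k + -b k := fun k hk => by
    rw [mul_neg, ← neg_add]
    exact neg_le_neg (hu k hk)
  have hgronwall := discrete_gronwall_prod_general (u := fun k => -u k) hneg hc hmn
  have hprod : 0 ≤ u m * ∏ i ∈ Ico m n, c i :=
    mul_nonneg hum (prod_nonneg fun i hi => hc i (mem_Ico.1 hi).1)
  simp only [neg_mul, sum_neg_distrib, ← neg_add, neg_le_neg_iff] at hgronwall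
  exact (le_add_of_nonneg_left hprod).trans hgronwall

section Field

variable {𝕜 : Type*} [Field 𝕜] [LinearOrder 𝕜] [IsStrictOrderedRing 𝕜]

theorem one_sub_div_mul_div_add_div_sq_le {a d K x : 𝕜} (hx : 0 < x) (hK : 0 ≤ K)
    (hKd : K + d ≤ a * K) : (1 - a / x) * (K / x) + d / x ^ 2 ≤ K / (x + 1) := by
  have hdrift : K / x - K / (x + 1) ≤ K / x ^ 2 := by
    rw [div_sub_div _ _ hx.ne' (by positivity), div_le_div_iff₀ (by positivity) (by positivity)]
    nlinarith [mul_nonneg hK hx.le]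
  have hdom : K / x ^ 2 + d / x ^ 2 ≤ a * K / x ^ 2 := by
    rw [← add_div]
    gcongr
  have hexpand : (1 - a / x) * (K / x) = K / x - a * K / x ^ 2 := by
    field_simp
  linarith

theorem sum_Ico_mul_prod_one_sub_div_le {a d t₀ : 𝕜} {b : ℕ → 𝕜} {m n : ℕ} (ha : 1 < a) (hd : 0 ≤ d)
    (ham : a ≤ m + t₀) (hb : ∀ k ≥ m, b k ≤ d / (k + t₀) ^ 2) (hmn : m ≤ n) :
    ∑ k ∈ Ico m n, b k * ∏ i ∈ Ico (k + 1) n, (1 - a / (i + t₀)) ≤ d / (a - 1) / (n + t₀) := by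
  have ha1 : a - 1 ≠ 0 := sub_ne_zero.2 ha.ne'
  have hK0 : 0 ≤ d / (a - 1) := div_nonneg hd (sub_pos.2 ha).le
  have hax : ∀ k ≥ m, a ≤ k + t₀ := fun k hk => ham.trans (by gcongr)
  have hx : ∀ k ≥ m, 0 < k + t₀ := fun k hk => by linarith [hax k hk]
  have hKd : d / (a - 1) + d = a * (d / (a - 1)) := by field_simp; ring
  refine sum_Ico_mul_prod_Ico_le_of_supersolution (u := fun k => d / (a - 1) / (k + t₀))
    (div_nonneg hK0 (hx m le_rfl).le) (fun k hk => ?_)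
    (fun k hk => sub_nonneg.2 ((div_le_one (hx k hk)).2 (hax k hk))) hmn
  calc (1 - a / (k + t₀)) * (d / (a - 1) / (k + t₀)) + b k
      ≤ (1 - a / (k + t₀)) * (d / (a - 1) / (k + t₀)) + d / (k + t₀) ^ 2 := by
        gcongr; exact hb k hk
    _ ≤ d / (a - 1) / (k + t₀ + 1) :=
        one_sub_div_mul_div_add_div_sq_le (hx k hk) hK0 hKd.le
    _ = d / (a - 1) / ((k + 1 : ℕ) + t₀) := by push_cast; rw [add_right_comm]

theorem sum_Icc_window_div_le {h t₀ : 𝕜} {τ k : ℕ} (hh : 0 ≤ h) (hτ : τ ≤ t₀) (hk : τ ≤ k) :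
    ∑ ℓ ∈ Icc (k - τ + 1) k, h / ((ℓ - 1 : ℕ) + t₀) ≤ 2 * h * τ / (k + t₀) := by
  have hterm : ∀ ℓ ∈ Icc (k - τ + 1) k, h / ((ℓ - 1 : ℕ) + t₀) ≤ 2 * h / (k + t₀) := by
    intro ℓ hℓ
    obtain ⟨hkℓ, hℓk⟩ := mem_Icc.1 hℓ
    have ht₀ : 0 < t₀ := (Nat.cast_pos.2 (by omega : 0 < τ)).trans_le hτ
    have hwindow : (k : 𝕜) ≤ (ℓ - 1 : ℕ) + τ := by exact_mod_cast (by omega : k ≤ ℓ - 1 + τ)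
    have hhalf : k + t₀ ≤ 2 * ((ℓ - 1 : ℕ) + t₀) := by linarith
    rw [div_le_div_iff₀ (add_pos_of_nonneg_of_pos (Nat.cast_nonneg _) ht₀)
      (add_pos_of_nonneg_of_pos (Nat.cast_nonneg _) ht₀)]
    linarith [mul_le_mul_of_nonneg_left hhalf hh]
  have hcard : #(Icc (k - τ + 1) k) = τ := by rw [Nat.card_Icc]; omega
  calc ∑ ℓ ∈ Icc (k - τ + 1) k, h / ((ℓ - 1 : ℕ) + t₀)
      ≤ #(Icc (k - τ + 1) k) • (2 * h / (k + t₀)) := sum_le_card_nsmul _ _ _ hterm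
    _ = 2 * h * τ / (k + t₀) := by rw [hcard, nsmul_eq_mul]; ring

theorem two_mul_sq_mul_div_sub_one_le {σ h τ : 𝕜} (hσ : 0 < σ) (hh : 0 ≤ h) (hτ : 0 ≤ τ)
    (hσh : 4 ≤ 3 * (σ * h)) : 2 * h ^ 2 * τ / (σ * h - 1) ≤ 8 * h * τ / σ := by
  have hgap : 0 ≤ 2 * (h * τ) * (3 * (σ * h) - 4) :=
    mul_nonneg (by positivity) (sub_nonneg.2 hσh)
  rw [div_le_div_iff₀ (by linarith) hσ]
  linarith

end Field

theorem stepsize_beta_alpha_sum_bound_general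
    (sg : ℝ) (τ : ℕ) (h t0 : ℝ) (hh : 0 < h) (hsgh : 1 < sg * h)
    (hτ : (τ : ℝ) ≤ t0) (ht0 : sg * h ≤ τ + t0)
    (α : ℕ → ℝ) (hα : ∀ t, α t = h / ((t : ℝ) + t0)) :
    ∀ t : ℕ, τ ≤ t →
      ∑ k ∈ Icc τ t, (α k * ∏ ℓ ∈ Icc (k + 1) t, (1 - sg * α ℓ)) *
          ∑ ℓ ∈ Icc (k - τ + 1) k, α (ℓ - 1) ≤
        2 * h ^ 2 * τ / (sg * h - 1) * (1 / ((t : ℝ) + 1 + t0)) := by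
  intro t ht
  have hterm : ∀ k ≥ τ,
      α k * ∑ ℓ ∈ Icc (k - τ + 1) k, α (ℓ - 1) ≤ 2 * h ^ 2 * τ / (k + t0) ^ 2 := by
    intro k hk
    have hx : 0 ≤ k + t0 := by linarith [k.cast_nonneg (α := ℝ), τ.cast_nonneg (α := ℝ)]
    simp only [hα]
    calc h / (k + t0) * ∑ ℓ ∈ Icc (k - τ + 1) k, h / ((ℓ - 1 : ℕ) + t0)
        ≤ h / (k + t0) * (2 * h * τ / (k + t0)) := by
          gcongr; exact sum_Icc_window_div_le hh.le hτ hk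
      _ = 2 * h ^ 2 * τ / (k + t0) ^ 2 := by rw [div_mul_div_comm]; ring
  have hsum := sum_Ico_mul_prod_one_sub_div_le hsgh (by positivity) ht0 hterm (ht.trans t.le_succ)
  simp only [Nat.succ_eq_add_one, Ico_add_one_right_eq_Icc, Nat.cast_add_one, mul_div_assoc sg,
    ← hα] at hsum
  simpa only [mul_right_comm, mul_one_div] using hsum

/-- **Lemma 3(c).** For step sizes `α_t = h/(t+t₀)` with `h > 2/σ` and `t₀ ≥ max(4h, τ)`,
the quantities `β_{k,t} = α_k ∏_{ℓ=k+1}^t (1-σα_ℓ)` satisfy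
`Σ_{k=τ}^t β_{k,t} Σ_{ℓ=k-τ+1}^{k} α_{ℓ-1} ≤ (8hτ/σ)·1/(t+1+t₀)` for every `t ≥ τ`. -/
theorem stepsize_beta_alpha_sum_bound
    (sg : ℝ) (hsg0 : 0 < sg) (hsg1 : sg < 1)
    (τ : ℕ) (hτ : 0 < τ)
    (h t0 : ℝ) (hh : 2 / sg < h) (ht0 : max (4 * h) (τ : ℝ) ≤ t0)
    (α : ℕ → ℝ) (hα : ∀ t, α t = h / ((t : ℝ) + t0)) :
    ∀ t : ℕ, τ ≤ t →
      ∑ k ∈ Finset.Icc τ t, (α k * ∏ ℓ ∈ Finset.Icc (k + 1) t, (1 - sg * α ℓ)) *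
          ∑ ℓ ∈ Finset.Icc (k - τ + 1) k, α (ℓ - 1) ≤
        (8 * h * (τ : ℝ) / sg) * (1 / ((t : ℝ) + 1 + t0)) := by
  have hh0 : 0 < h := (by positivity : 0 < 2 / sg).trans hh
  have hsgh : 2 < sg * h := (div_lt_iff₀' hsg0).1 hh
  obtain ⟨hht0, hτt0⟩ := max_le_iff.1 ht0
  have hsgh_le : sg * h ≤ τ + t0 := by
    linarith [mul_lt_of_lt_one_left hh0 hsg1, τ.cast_nonneg (α := ℝ)]
  intro t ht
  refine (stepsize_beta_alpha_sum_bound_general sg τ h t0 hh0 (by linarith) hτt0 hsgh_le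
    α hα t ht).trans (mul_le_mul_of_nonneg_right ?_ ?_)
  · exact two_mul_sq_mul_div_sub_one_le hsg0 hh0.le τ.cast_nonneg (by linarith)
  · have ht0_nonneg : 0 ≤ t0 := τ.cast_nonneg.trans hτt0
    positivity
end

section
/- Let (ℱ_t)_{t≥0} be a filtration on a probability space, τ a positive integer, and (X_t)_{t≥0} a real-valued (ℱ_t)-adapted process satisfying E[X_t | ℱ_{t−τ}] = 0 for every t ≥ τ and E[X_t] = 0 for 0 ≤ t < τ, and |X_t| ≤ X̄_t almost surely for deterministic constants X̄_t. Then for every t ≥ 0 and every δ ∈ (0,1), with probability at least 1 − δ, |Σ_{k=0}^{t} X_k| ≤ √(2τ · (Σ_{k=0}^{t} X̄_k²) · log(2τ/δ)). -/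
/-!
Indices in one residue class modulo `τ` are at least `τ` apart, so along each class `X` is an
ordinary martingale difference sequence, and Azuma–Hoeffding makes the class sum sub-Gaussian.
The induction step adds `X` to `Y` when `E[X | m] = 0` and `Y` is `m`-measurable: since
`E[exp (s * (Y + X))] / E[exp (s * Y)]` is the moment generating function of `X` under the measure
tilted by `s * Y`, and `X` is still centered under that measure, Hoeffding's lemma applies to it.
Unlike conditional sub-Gaussianity in Mathlib, this does not need a standard Borel space.

The `τ` class sums are dependent. Square roots of sub-Gaussian parameters add, so by Cauchy–Schwarz
the total is sub-Gaussian with `τ` times the sum of the parameters. A single two-sided Chernoff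
bound then gives `log (2 / δ)`, where a union bound over the classes gives `log (2 * τ / δ)`.
-/

open MeasureTheory Finset

section

open ProbabilityTheory NNReal

variable {Ω ι : Type*} {m m0 : MeasurableSpace Ω} {μ : Measure Ω}

lemma hasSubgaussianMGF_mono {X : Ω → ℝ} {c d : ℝ≥0} (hX : HasSubgaussianMGF X c μ)
    (hcd : c ≤ d) : HasSubgaussianMGF X d μ where
  integrable_exp_mul := hX.integrable_exp_mul
  mgf_le s := (hX.mgf_le s).trans (by gcongr)

lemma hasSubgaussianMGF_sum_sq_sum_sqrt {X : ι → Ω → ℝ} {c : ι → ℝ≥0} {s : Finset ι}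
    [IsZeroOrProbabilityMeasure μ] (hX : ∀ i ∈ s, HasSubgaussianMGF (X i) (c i) μ) :
    HasSubgaussianMGF (fun ω ↦ ∑ i ∈ s, X i ω) ((∑ i ∈ s, (c i).sqrt) ^ 2) μ := by
  classical
  induction s using Finset.induction_on with
  | empty => simp
  | insert i s hi ih =>
    rw [forall_mem_insert] at hX
    simpa only [sum_insert hi, NNReal.sqrt_sq] using hX.1.add (ih hX.2)

lemma hasSubgaussianMGF_sum_card_mul_sum {X : ι → Ω → ℝ} {c : ι → ℝ≥0} {s : Finset ι}
    [IsZeroOrProbabilityMeasure μ] (hX : ∀ i ∈ s, HasSubgaussianMGF (X i) (c i) μ) :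
    HasSubgaussianMGF (fun ω ↦ ∑ i ∈ s, X i ω) (#s * ∑ i ∈ s, c i) μ :=
  hasSubgaussianMGF_mono (hasSubgaussianMGF_sum_sq_sum_sqrt hX) <| by
    simpa only [NNReal.sq_sqrt] using sq_sum_le_card_mul_sum_sq (s := s) (f := fun i ↦ (c i).sqrt)

lemma measureReal_lt_abs_le_of_hasSubgaussianMGF {X : Ω → ℝ} {c : ℝ≥0} {ε : ℝ}
    [IsFiniteMeasure μ] (hX : HasSubgaussianMGF X c μ) (hε : 0 ≤ ε) :
    μ.real {ω | ε < |X ω|} ≤ 2 * Real.exp (-ε ^ 2 / (2 * c)) := by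
  have hsub : {ω | ε < |X ω|} ⊆ {ω | ε ≤ X ω} ∪ {ω | ε ≤ (-X) ω} := by
    rintro ω (hω : ε < |X ω|)
    obtain hpos | hneg := lt_abs.1 hω
    exacts [.inl hpos.le, .inr hneg.le]
  calc μ.real {ω | ε < |X ω|}
    _ ≤ μ.real {ω | ε ≤ X ω} + μ.real {ω | ε ≤ (-X) ω} :=
      (measureReal_mono hsub).trans (measureReal_union_le _ _)
    _ ≤ 2 * Real.exp (-ε ^ 2 / (2 * c)) := by
      rw [two_mul]
      exact add_le_add (hX.measure_ge_le hε) (hX.neg.measure_ge_le hε)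

lemma measureReal_sqrt_lt_abs_le_of_hasSubgaussianMGF {X : Ω → ℝ} {c : ℝ≥0} {δ : ℝ}
    [IsFiniteMeasure μ] (hX : HasSubgaussianMGF X c μ) (hδ : 0 < δ) :
    μ.real {ω | √(2 * c * Real.log (2 / δ)) < |X ω|} ≤ δ := by
  obtain rfl | hc := eq_zero_or_pos c
  · -- The exponent in the Chernoff bound is the junk value `0 / 0` here.
    have hnull : μ {ω | X ω ≠ 0} = 0 := ae_iff.1 hX.ae_eq_zero_of_hasSubgaussianMGF_zero
    simpa [measureReal_def, hnull] using hδ.le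
  -- For `2 < δ` the logarithm is negative and the square root is `0`, so equality can fail.
  have hsq : 2 * c * Real.log (2 / δ) ≤ √(2 * c * Real.log (2 / δ)) ^ 2 := by
    rw [Real.sq_sqrt']
    exact le_max_left _ _
  calc μ.real {ω | √(2 * c * Real.log (2 / δ)) < |X ω|}
    _ ≤ 2 * Real.exp (-√(2 * c * Real.log (2 / δ)) ^ 2 / (2 * c)) :=
      measureReal_lt_abs_le_of_hasSubgaussianMGF hX (Real.sqrt_nonneg _)
    _ ≤ 2 * Real.exp (-Real.log (2 / δ)) := by
      gcongr
      rw [div_le_iff₀ (by positivity)]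
      linarith
    _ = δ := by
      rw [Real.exp_neg, Real.exp_log (by positivity)]
      field_simp

lemma integral_mul_eq_zero_of_condExp_eq_zero {X Z : Ω → ℝ} (hm : m ≤ m0)
    [SigmaFinite (μ.trim hm)] (hZ : StronglyMeasurable[m] Z) (hX : Integrable X μ)
    (hZX : Integrable (Z * X) μ) (hcond : μ[X | m] =ᵐ[μ] 0) :
    ∫ ω, Z ω * X ω ∂μ = 0 := by
  have hpull : μ[Z * X | m] =ᵐ[μ] 0 := by
    filter_upwards [condExp_mul_of_stronglyMeasurable_left hZ hZX hX, hcond] with ω h h0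
    simp [h, h0]
  calc ∫ ω, Z ω * X ω ∂μ = ∫ ω, (μ[Z * X | m]) ω ∂μ := (integral_condExp hm).symm
    _ = 0 := integral_eq_zero_of_ae hpull

lemma mgf_add_eq_mgf_mul_mgf_tilted {X Y : Ω → ℝ} {s : ℝ} [NeZero μ]
    (hY : Integrable (fun ω ↦ Real.exp (s * Y ω)) μ) :
    mgf (fun ω ↦ Y ω + X ω) μ s = mgf Y μ s * mgf X (μ.tilted (s * Y ·)) s := by
  have htilted : mgf X (μ.tilted (s * Y ·)) s = mgf (fun ω ↦ Y ω + X ω) μ s / mgf Y μ s := by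
    simp only [mgf, integral_exp_tilted, Pi.add_apply, mul_add]
  rw [htilted, mul_div_cancel₀ _ (mgf_pos' (NeZero.ne μ) hY).ne']

lemma hasSubgaussianMGF_add_of_integral_tilted_eq_zero {X Y : Ω → ℝ} {c : ℝ≥0} {a b : ℝ}
    [NeZero μ] (hY : HasSubgaussianMGF Y c μ) (hX : AEMeasurable X μ)
    (hXab : ∀ᵐ ω ∂μ, X ω ∈ Set.Icc a b) (hmean : ∀ s, ∫ ω, X ω ∂μ.tilted (s * Y ·) = 0) :
    HasSubgaussianMGF (fun ω ↦ Y ω + X ω) (c + (‖b - a‖₊ / 2) ^ 2) μ := by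
  have hoeffding (s : ℝ) : HasSubgaussianMGF X ((‖b - a‖₊ / 2) ^ 2) (μ.tilted (s * Y ·)) := by
    have := isProbabilityMeasure_tilted (hY.integrable_exp_mul s)
    have hac := tilted_absolutelyContinuous μ (s * Y ·)
    exact hasSubgaussianMGF_of_mem_Icc_of_integral_eq_zero (hX.mono_ac hac) (hac hXab) (hmean s)
  refine ⟨fun s ↦ ?_, fun s ↦ ?_⟩
  · simpa only [smul_eq_mul, ← Real.exp_add, ← mul_add] using
      (integrable_tilted_iff (hY.integrable_exp_mul s) _).1 ((hoeffding s).integrable_exp_mul s)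
  · calc mgf (fun ω ↦ Y ω + X ω) μ s
      _ = mgf Y μ s * mgf X (μ.tilted (s * Y ·)) s :=
        mgf_add_eq_mgf_mul_mgf_tilted (hY.integrable_exp_mul s)
      _ ≤ Real.exp (c * s ^ 2 / 2) * Real.exp (((‖b - a‖₊ / 2) ^ 2 : ℝ≥0) * s ^ 2 / 2) :=
        mul_le_mul (hY.mgf_le s) ((hoeffding s).mgf_le s) mgf_nonneg (Real.exp_pos _).le
      _ = Real.exp ((c + (‖b - a‖₊ / 2) ^ 2 : ℝ≥0) * s ^ 2 / 2) := by
        rw [← Real.exp_add, NNReal.coe_add, add_mul, add_div]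

variable [IsProbabilityMeasure μ]

lemma hasSubgaussianMGF_add_of_condExp_eq_zero {X Y : Ω → ℝ} {c : ℝ≥0} {a b : ℝ} (hm : m ≤ m0)
    (hY : HasSubgaussianMGF Y c μ) (hYm : Measurable[m] Y) (hX : AEMeasurable X μ)
    (hXab : ∀ᵐ ω ∂μ, X ω ∈ Set.Icc a b) (hcond : μ[X | m] =ᵐ[μ] 0) :
    HasSubgaussianMGF (fun ω ↦ Y ω + X ω) (c + (‖b - a‖₊ / 2) ^ 2) μ := by
  refine hasSubgaussianMGF_add_of_integral_tilted_eq_zero hY hX hXab fun s ↦ ?_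
  rw [integral_tilted]
  have hXint : Integrable X μ := .of_mem_Icc a b hX hXab
  refine integral_mul_eq_zero_of_condExp_eq_zero hm ?_ hXint ?_ hcond
  · exact ((hYm.const_mul s).exp.div_const _).stronglyMeasurable
  · refine ((hY.integrable_exp_mul s).div_const _).mul_bdd (c := max |a| |b|)
      hX.aestronglyMeasurable ?_
    filter_upwards [hXab] with ω hω using abs_le_max_abs_abs hω.1 hω.2

lemma hasSubgaussianMGF_sum_of_condExp_eq_zero [LinearOrder ι] {X : ι → Ω → ℝ}
    {𝒢 : ι → MeasurableSpace Ω} {a b : ι → ℝ} {s : Finset ι} (h𝒢 : ∀ i ∈ s, 𝒢 i ≤ m0)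
    (hpred : ∀ i ∈ s, ∀ j ∈ s, j < i → Measurable[𝒢 i] (X j))
    (hX : ∀ i ∈ s, AEMeasurable (X i) μ)
    (hXab : ∀ i ∈ s, ∀ᵐ ω ∂μ, X i ω ∈ Set.Icc (a i) (b i))
    (hcond : ∀ i ∈ s, μ[X i | 𝒢 i] =ᵐ[μ] 0) :
    HasSubgaussianMGF (fun ω ↦ ∑ i ∈ s, X i ω) (∑ i ∈ s, (‖b i - a i‖₊ / 2) ^ 2) μ := by
  induction s using Finset.induction_on_max with
  | empty => simp
  | insert i s hlt ih =>
    have hi : i ∉ s := fun h ↦ (hlt i h).false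
    have his : i ∈ insert i s := mem_insert_self i s
    have hsum : HasSubgaussianMGF (fun ω ↦ ∑ j ∈ s, X j ω) (∑ j ∈ s, (‖b j - a j‖₊ / 2) ^ 2) μ :=
      ih (fun j hj ↦ h𝒢 j (mem_insert_of_mem hj))
        (fun j hj k hk ↦ hpred j (mem_insert_of_mem hj) k (mem_insert_of_mem hk))
        (fun j hj ↦ hX j (mem_insert_of_mem hj)) (fun j hj ↦ hXab j (mem_insert_of_mem hj))
        (fun j hj ↦ hcond j (mem_insert_of_mem hj))
    have hmeas : Measurable[𝒢 i] (fun ω ↦ ∑ j ∈ s, X j ω) :=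
      measurable_fun_sum s fun j hj ↦ hpred i his j (mem_insert_of_mem hj) (hlt j hj)
    simpa only [sum_insert hi, add_comm] using hasSubgaussianMGF_add_of_condExp_eq_zero
      (h𝒢 i his) hsum hmeas (hX i his) (hXab i his) (hcond i his)

lemma ofReal_one_sub_le_measure_of_measureReal_compl_le {s : Set Ω} {δ : ℝ}
    (hs : μ.real sᶜ ≤ δ) : ENNReal.ofReal (1 - δ) ≤ μ s := by
  refine ENNReal.ofReal_le_of_le_toReal ?_
  have huniv : μ.real Set.univ ≤ μ.real s + μ.real sᶜ := by
    simpa only [Set.union_compl_self] using measureReal_union_le s sᶜ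
  rw [probReal_univ] at huniv
  rw [← measureReal_def]
  linarith

/-- The filtration `ℱ` delayed by `τ` steps, `t ↦ ℱ (t - τ)`, where the σ-algebras at negative
times are trivial. It turns the two centering conditions on a shifted martingale difference
sequence into a single one. -/
def laggedFiltration (ℱ : Filtration ℕ m0) (τ : ℕ) : Filtration ℕ m0 where
  seq t := if τ ≤ t then ℱ (t - τ) else ⊥
  mono' s t hst := by
    by_cases hs : τ ≤ s
    · simpa only [if_pos hs, if_pos (hs.trans hst)] using ℱ.mono (Nat.sub_le_sub_right hst τ)
    · simp only [if_neg hs, bot_le]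
  le' t := by
    split_ifs
    exacts [ℱ.le _, bot_le]

lemma laggedFiltration_of_le {ℱ : Filtration ℕ m0} {τ t : ℕ} (h : τ ≤ t) :
    laggedFiltration ℱ τ t = ℱ (t - τ) :=
  if_pos h

lemma laggedFiltration_of_lt {ℱ : Filtration ℕ m0} {τ t : ℕ} (h : t < τ) :
    laggedFiltration ℱ τ t = ⊥ :=
  if_neg h.not_ge

lemma condExp_laggedFiltration_eq_zero {ℱ : Filtration ℕ m0} {τ : ℕ} {X : ℕ → Ω → ℝ}
    (hshift : ∀ t, τ ≤ t → μ[X t | ℱ (t - τ)] =ᵐ[μ] 0)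
    (hmean0 : ∀ t, t < τ → ∫ ω, X t ω ∂μ = 0) (t : ℕ) :
    μ[X t | laggedFiltration ℱ τ t] =ᵐ[μ] 0 := by
  obtain hτt | htτ := le_or_gt τ t
  · simpa only [laggedFiltration_of_le hτt] using hshift t hτt
  · rw [laggedFiltration_of_lt htτ, condExp_bot, hmean0 t htτ]
    rfl

lemma hasSubgaussianMGF_sum_filter_mod {ℱ : Filtration ℕ m0} {τ : ℕ} {X : ℕ → Ω → ℝ}
    {a b : ℕ → ℝ} (hadapted : Adapted ℱ X)
    (hcond : ∀ t, μ[X t | laggedFiltration ℱ τ t] =ᵐ[μ] 0)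
    (hXab : ∀ t, ∀ᵐ ω ∂μ, X t ω ∈ Set.Icc (a t) (b t)) (s : Finset ℕ) (r : ℕ) :
    HasSubgaussianMGF (fun ω ↦ ∑ k ∈ s with k % τ = r, X k ω)
      (∑ k ∈ s with k % τ = r, (‖b k - a k‖₊ / 2) ^ 2) μ := by
  refine hasSubgaussianMGF_sum_of_condExp_eq_zero
    (fun i _ ↦ (laggedFiltration ℱ τ).le i) (fun i hi j hj hji ↦ ?_)
    (fun i _ ↦ ((hadapted i).mono (ℱ.le i) le_rfl).aemeasurable) (fun i _ ↦ hXab i)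
    (fun i _ ↦ hcond i)
  have hmod : j ≡ i [MOD τ] := (mem_filter.1 hj).2.trans (mem_filter.1 hi).2.symm
  have hgap : j + τ ≤ i := hmod.add_le_of_lt hji
  rw [laggedFiltration_of_le (by lia)]
  exact (hadapted j).mono (ℱ.mono (Nat.le_sub_of_add_le hgap)) le_rfl

lemma hasSubgaussianMGF_sum_of_condExp_laggedFiltration_eq_zero {ℱ : Filtration ℕ m0} {τ : ℕ}
    {X : ℕ → Ω → ℝ} {a b : ℕ → ℝ} (hτ : 0 < τ) (hadapted : Adapted ℱ X)
    (hcond : ∀ t, μ[X t | laggedFiltration ℱ τ t] =ᵐ[μ] 0)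
    (hXab : ∀ t, ∀ᵐ ω ∂μ, X t ω ∈ Set.Icc (a t) (b t)) (s : Finset ℕ) :
    HasSubgaussianMGF (fun ω ↦ ∑ k ∈ s, X k ω) (τ * ∑ k ∈ s, (‖b k - a k‖₊ / 2) ^ 2) μ := by
  have hclass : ∀ k ∈ s, k % τ ∈ range τ := fun k _ ↦ mem_range.2 (Nat.mod_lt k hτ)
  simpa only [sum_fiberwise_of_maps_to hclass, card_range] using
    hasSubgaussianMGF_sum_card_mul_sum (s := range τ)
      fun r _ ↦ hasSubgaussianMGF_sum_filter_mod hadapted hcond hXab s r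

end

theorem shifted_azuma_hoeffding_general
    {Ω : Type*} {m0 : MeasurableSpace Ω} (μ : Measure Ω) [IsProbabilityMeasure μ]
    (ℱ : Filtration ℕ m0) (τ : ℕ) (hτ : 0 < τ)
    (X : ℕ → Ω → ℝ) (hadapted : Adapted ℱ X)
    (hshift : ∀ t, τ ≤ t → μ[X t | ℱ (t - τ)] =ᵐ[μ] 0)
    (hmean0 : ∀ t, t < τ → ∫ ω, X t ω ∂μ = 0)
    (a b : ℕ → ℝ) (hXab : ∀ t, ∀ᵐ ω ∂μ, X t ω ∈ Set.Icc (a t) (b t))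
    (s : Finset ℕ) {δ : ℝ} (hδ : 0 < δ) :
    ENNReal.ofReal (1 - δ) ≤
      μ {ω | |∑ k ∈ s, X k ω| ≤
        √(2 * τ * (∑ k ∈ s, ((b k - a k) / 2) ^ 2) * Real.log (2 / δ))} := by
  have htail := measureReal_sqrt_lt_abs_le_of_hasSubgaussianMGF
    (hasSubgaussianMGF_sum_of_condExp_laggedFiltration_eq_zero hτ hadapted
      (condExp_laggedFiltration_eq_zero hshift hmean0) hXab s) hδ
  refine ofReal_one_sub_le_measure_of_measureReal_compl_le ?_
  simpa [Set.compl_ofPred, div_pow, mul_assoc] using htail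

/-- **Lemma 6 (Azuma–Hoeffding for a shifted martingale difference sequence).**
If `(X_t)` is `(ℱ_t)`-adapted with `E[X_t | ℱ_{t-τ}] = 0` for `t ≥ τ`, `E[X_t] = 0` for
`0 ≤ t < τ`, and `|X_t| ≤ X̄_t` a.s., then for every `t` and `δ ∈ (0,1)`, with probability
at least `1-δ`, `|Σ_{k=0}^t X_k| ≤ √(2τ (Σ_{k=0}^t X̄_k²) log(2τ/δ))`. -/
theorem shifted_azuma_hoeffding
    {Ω : Type*} {m0 : MeasurableSpace Ω} (μ : Measure Ω) [IsProbabilityMeasure μ]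
    (ℱ : Filtration ℕ m0) (τ : ℕ) (hτ : 0 < τ)
    (X : ℕ → Ω → ℝ) (hadapted : Adapted ℱ X)
    (hshift : ∀ t, τ ≤ t → μ[X t | ℱ (t - τ)] =ᵐ[μ] 0)
    (hmean0 : ∀ t, t < τ → ∫ ω, X t ω ∂μ = 0)
    (Xbar : ℕ → ℝ) (hbd : ∀ t, ∀ᵐ ω ∂μ, |X t ω| ≤ Xbar t) :
    ∀ (t : ℕ) (δ : ℝ), 0 < δ → δ < 1 →
      ENNReal.ofReal (1 - δ) ≤
        μ {ω | |∑ k ∈ Finset.range (t + 1), X k ω| ≤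
          Real.sqrt (2 * (τ : ℝ) * (∑ k ∈ Finset.range (t + 1), Xbar k ^ 2) *
            Real.log (2 * (τ : ℝ) / δ))} := by
  intro t δ hδ _
  have hτ1 : (1 : ℝ) ≤ τ := by exact_mod_cast hτ
  have hwide := shifted_azuma_hoeffding_general μ ℱ τ hτ X hadapted hshift hmean0 (-Xbar) Xbar
    (fun t ↦ by simpa only [Set.mem_Icc, Pi.neg_apply, ← abs_le] using hbd t) (range (t + 1)) hδ
  simp only [Pi.neg_apply, sub_neg_eq_add, add_self_div_two] at hwide
  refine hwide.trans (measure_mono (Set.ofPred_subset_ofPred.2 fun ω hω ↦ hω.trans ?_))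
  gcongr
  linarith
end

section
/- Let σ ∈ (0,1), v > 0, ε̄ > 0, and integers 0 ≤ τ ≤ t. Let (α_k), (d_k), (ε_k) be real sequences with α_k ∈ (0,1], d_k ∈ [σ, 1], and |ε_k| ≤ ε̄ v for all τ ≤ k ≤ t. Set β_{k,t} = α_k ∏_{ℓ=k+1}^{t}(1 − σ α_ℓ). Then |Σ_{k=τ}^{t} α_k ε_k ∏_{ℓ=k+1}^{t}(1 − α_ℓ d_ℓ)| ≤ max_{τ ≤ k0 ≤ t} ( |Σ_{k=k0+1}^{t} ε_k β_{k,t}| + 2 ε̄ v β_{k0,t} ). -/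
open Finset

/-!
For weights `0 ≤ p ≤ q`, let `A t` and `S j t` be the sums of the terms `x k`, from `k = τ` and from
`k = j` respectively, discounted after time `k` by `p` and by `q`. Both satisfy first-order
recursions, `A (t + 1) = p (t + 1) * A t + x (t + 1)` and likewise for `S j` with `q`. If
`A t ≤ S j t` and `0 ≤ S j t`, then replacing `p` by `q` preserves the bound at time `t + 1`; if
`S j t ≤ 0`, then discarding the past gives `A (t + 1) ≤ x (t + 1) = S (t + 1) (t + 1)`. So `A t` is
always at most some `S j t`. Applied to `x` and `-x` this bounds `|A t|` by some `|S j t|`, and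
splitting off the term `k = j` of `S j t` costs at most its absolute value.
-/

/-- The sum of `x k` over `j ≤ k ≤ t`, where each term is discounted by the weights `w ℓ` at the
later times `k < ℓ ≤ t`. With `x k = α k * ε k`, it is the weighted noise sum for
`w ℓ = 1 - α ℓ * d ℓ`, and `∑ ε k * β_{k,t}` for `w ℓ = 1 - σ * α ℓ`. -/
def discountedSum {R : Type*} [CommSemiring R] (x w : ℕ → R) (j t : ℕ) : R :=
  ∑ k ∈ Icc j t, x k * ∏ ℓ ∈ Icc (k + 1) t, w ℓ

section Recursion

variable {R : Type*} [CommSemiring R] (x w : ℕ → R) {j t : ℕ}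

lemma discountedSum_self (t : ℕ) : discountedSum x w t t = x t := by
  simp [discountedSum]

lemma discountedSum_succ_right (hjt : j ≤ t + 1) :
    discountedSum x w j (t + 1) = w (t + 1) * discountedSum x w j t + x (t + 1) := by
  unfold discountedSum
  rw [sum_Icc_succ_top hjt, mul_sum]
  congr 1
  · refine sum_congr rfl fun k hk ↦ ?_
    rw [prod_Icc_succ_top (Nat.succ_le_succ (mem_Icc.mp hk).2)]
    ring
  · simp

lemma discountedSum_eq_head_add (hjt : j ≤ t) :
    discountedSum x w j t = x j * ∏ ℓ ∈ Icc (j + 1) t, w ℓ + discountedSum x w (j + 1) t := by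
  unfold discountedSum
  rw [← insert_Icc_add_one_left_eq_Icc hjt, sum_insert (by simp)]

end Recursion

lemma discountedSum_neg {R : Type*} [CommRing R] (x w : ℕ → R) (j t : ℕ) :
    discountedSum (-x) w j t = -discountedSum x w j t := by
  simp [discountedSum]

section Comparison

variable {R : Type*} [CommRing R] [LinearOrder R] [IsOrderedRing R] {p q : ℕ → R} {τ t : ℕ}

lemma exists_discountedSum_le (x : ℕ → R) (hτt : τ ≤ t) (hp : ∀ ℓ ∈ Ioc τ t, 0 ≤ p ℓ)
    (hpq : ∀ ℓ ∈ Ioc τ t, p ℓ ≤ q ℓ) :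
    ∃ j ∈ Icc τ t, discountedSum x p τ t ≤ discountedSum x q j t := by
  induction t, hτt using Nat.le_induction with
  | base => exact ⟨τ, by simp, by simp [discountedSum_self]⟩
  | succ t hτt ih =>
    have hsub : Ioc τ t ⊆ Ioc τ (t + 1) := Ioc_subset_Ioc_right t.le_succ
    have hmem : t + 1 ∈ Ioc τ (t + 1) := mem_Ioc.mpr ⟨by omega, le_rfl⟩
    obtain ⟨j, hj, hle⟩ := ih (fun ℓ hℓ ↦ hp ℓ (hsub hℓ)) (fun ℓ hℓ ↦ hpq ℓ (hsub hℓ))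
    obtain ⟨hτj, hjt⟩ := mem_Icc.mp hj
    have hstep : discountedSum x p τ (t + 1) ≤
        p (t + 1) * discountedSum x q j t + x (t + 1) := by
      rw [discountedSum_succ_right x p (by omega)]
      gcongr
      exact hp _ hmem
    rcases le_total 0 (discountedSum x q j t) with hS | hS
    · refine ⟨j, mem_Icc.mpr ⟨hτj, by omega⟩, hstep.trans ?_⟩
      rw [discountedSum_succ_right x q (by omega)]
      gcongr
      exact hpq _ hmem
    · refine ⟨t + 1, mem_Icc.mpr ⟨by omega, le_rfl⟩, hstep.trans ?_⟩
      rw [discountedSum_self]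
      exact add_le_of_nonpos_left (mul_nonpos_of_nonneg_of_nonpos (hp _ hmem) hS)

lemma exists_abs_discountedSum_le (x : ℕ → R) (hτt : τ ≤ t) (hp : ∀ ℓ ∈ Ioc τ t, 0 ≤ p ℓ)
    (hpq : ∀ ℓ ∈ Ioc τ t, p ℓ ≤ q ℓ) :
    ∃ j ∈ Icc τ t, |discountedSum x p τ t| ≤ |discountedSum x q j t| := by
  rcases abs_choice (discountedSum x p τ t) with habs | habs
  · obtain ⟨j, hj, hle⟩ := exists_discountedSum_le x hτt hp hpq
    exact ⟨j, hj, habs.trans_le (hle.trans (le_abs_self _))⟩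
  · obtain ⟨j, hj, hle⟩ := exists_discountedSum_le (-x) hτt hp hpq
    rw [discountedSum_neg, discountedSum_neg] at hle
    exact ⟨j, hj, habs.trans_le (hle.trans (neg_le_abs _))⟩

lemma exists_abs_discountedSum_le_tail_add_head (x : ℕ → R) (hτt : τ ≤ t)
    (hp : ∀ ℓ ∈ Ioc τ t, 0 ≤ p ℓ) (hpq : ∀ ℓ ∈ Ioc τ t, p ℓ ≤ q ℓ) :
    ∃ j ∈ Icc τ t, |discountedSum x p τ t| ≤
      |discountedSum x q (j + 1) t| + |x j * ∏ ℓ ∈ Icc (j + 1) t, q ℓ| := by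
  obtain ⟨j, hj, hle⟩ := exists_abs_discountedSum_le x hτt hp hpq
  refine ⟨j, hj, hle.trans ?_⟩
  rw [discountedSum_eq_head_add x q (mem_Icc.mp hj).2, add_comm]
  exact abs_add_le _ _

end Comparison

theorem weighted_noise_sum_comparison_general {R : Type*} [CommRing R] [LinearOrder R]
    [IsOrderedRing R] {σ C : R} {τ t : ℕ} (hτt : τ ≤ t) {α d ε : ℕ → R}
    (hα : ∀ k, τ ≤ k → k ≤ t → 0 ≤ α k) (hσd : ∀ k, τ < k → k ≤ t → σ ≤ d k)
    (hαd : ∀ k, τ < k → k ≤ t → α k * d k ≤ 1) (hε : ∀ k, τ ≤ k → k ≤ t → |ε k| ≤ C) :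
    |∑ k ∈ Icc τ t, α k * ε k * ∏ ℓ ∈ Icc (k + 1) t, (1 - α ℓ * d ℓ)| ≤
      (Icc τ t).sup' (nonempty_Icc.mpr hτt) fun k0 ↦
        |∑ k ∈ Icc (k0 + 1) t, ε k * (α k * ∏ ℓ ∈ Icc (k + 1) t, (1 - σ * α ℓ))| +
          C * (α k0 * ∏ ℓ ∈ Icc (k0 + 1) t, (1 - σ * α ℓ)) := by
  have hp : ∀ ℓ ∈ Ioc τ t, 0 ≤ 1 - α ℓ * d ℓ := fun ℓ hℓ ↦ by
    obtain ⟨hτℓ, hℓt⟩ := mem_Ioc.mp hℓ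
    exact sub_nonneg.mpr (hαd ℓ hτℓ hℓt)
  have hpq : ∀ ℓ ∈ Ioc τ t, 1 - α ℓ * d ℓ ≤ 1 - σ * α ℓ := fun ℓ hℓ ↦ by
    obtain ⟨hτℓ, hℓt⟩ := mem_Ioc.mp hℓ
    rw [mul_comm σ]
    gcongr
    exacts [hα ℓ hτℓ.le hℓt, hσd ℓ hτℓ hℓt]
  obtain ⟨j, hj, hle⟩ :=
    exists_abs_discountedSum_le_tail_add_head (fun k ↦ α k * ε k) hτt hp hpq
  refine (hle.trans ?_).trans (le_sup' _ hj)
  obtain ⟨hτj, hjt⟩ := mem_Icc.mp hj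
  have hβ : 0 ≤ α j * ∏ ℓ ∈ Icc (j + 1) t, (1 - σ * α ℓ) :=
    mul_nonneg (hα j hτj hjt) <| prod_nonneg fun ℓ hℓ ↦
      have hmem : ℓ ∈ Ioc τ t := mem_Ioc.mpr (by have := mem_Icc.mp hℓ; omega)
      (hp ℓ hmem).trans (hpq ℓ hmem)
  have htail : discountedSum (fun k ↦ α k * ε k) (fun ℓ ↦ 1 - σ * α ℓ) (j + 1) t =
      ∑ k ∈ Icc (j + 1) t, ε k * (α k * ∏ ℓ ∈ Icc (k + 1) t, (1 - σ * α ℓ)) :=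
    sum_congr rfl fun k _ ↦ by ring
  rw [htail, mul_comm (α j), mul_assoc, abs_mul, abs_of_nonneg hβ]
  gcongr
  exact hε j hτj hjt

/-- **Lemma 7 (deterministic comparison lemma).** For sequences `α_k ∈ (0,1]`,
`d_k ∈ [σ,1]` and `|ε_k| ≤ ε̄v` on `τ ≤ k ≤ t`, with `β_{k,t} = α_k ∏_{ℓ=k+1}^t (1-σα_ℓ)`,
`|Σ_{k=τ}^t α_k ε_k ∏_{ℓ=k+1}^t (1-α_ℓ d_ℓ)| ≤
  max_{τ ≤ k₀ ≤ t} (|Σ_{k=k₀+1}^t ε_k β_{k,t}| + 2ε̄v β_{k₀,t})`. -/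
theorem weighted_noise_sum_comparison
    (sg v ebar : ℝ) (hsg0 : 0 < sg) (hsg1 : sg < 1) (hv : 0 < v) (hebar : 0 < ebar)
    (τ t : ℕ) (hτt : τ ≤ t)
    (α d ε : ℕ → ℝ)
    (hα : ∀ k, τ ≤ k → k ≤ t → α k ∈ Set.Ioc (0 : ℝ) 1)
    (hd : ∀ k, τ ≤ k → k ≤ t → d k ∈ Set.Icc sg 1)
    (hε : ∀ k, τ ≤ k → k ≤ t → |ε k| ≤ ebar * v) :
    |∑ k ∈ Finset.Icc τ t, α k * ε k * ∏ ℓ ∈ Finset.Icc (k + 1) t, (1 - α ℓ * d ℓ)| ≤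
      (Finset.Icc τ t).sup' (Finset.nonempty_Icc.mpr hτt) (fun k0 =>
        |∑ k ∈ Finset.Icc (k0 + 1) t,
            ε k * (α k * ∏ ℓ ∈ Finset.Icc (k + 1) t, (1 - sg * α ℓ))| +
          2 * ebar * v * (α k0 * ∏ ℓ ∈ Finset.Icc (k0 + 1) t, (1 - sg * α ℓ))) := by
  exact weighted_noise_sum_comparison_general hτt (fun k h h' ↦ (hα k h h').1.le)
    (fun k h h' ↦ (hd k h.le h').1)
    (fun k h h' ↦
      mul_le_one₀ (hα k h.le h').2 (hsg0.le.trans (hd k h.le h').1) (hd k h.le h').2)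
    (fun k h h' ↦ (hε k h h').trans (by linarith [mul_pos hebar hv]))
end

section
/- Let γ ∈ (0,1), σ ∈ (0,1), h > 0 with σh(1−√γ) ≥ 1, t0 ≥ 1 with h/t0 ≤ 1/2, and α_k = h/(k + t0). Let (d_k) be any real sequence with d_k ∈ [σ, 1] for all k, and define b_{k,t} = α_k d_k ∏_{ℓ=k+1}^{t}(1 − α_ℓ d_ℓ). Then for every 0 < ω ≤ 1 and all integers 0 ≤ τ ≤ t: Σ_{k=τ}^{t} b_{k,t} · (k+t0)^{−ω} ≤ 1/(√γ · (t+1+t0)^ω). -/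
open Finset

/-!
Write `x_k = k + t₀`, `β_k = α_k d_k` and `s = √γ`. The sums `S_n` of `b_{k,n-1} x_k^{-ω}` over
`τ ≤ k < n` start at `S_τ = 0` and satisfy `S_{n+1} = (1 - β_n) S_n + β_n x_n^{-ω}`, so it is enough
that `v_n = x_n^{-ω} / s` is a nonnegative supersolution of this recursion. Substituting `v` gives
`(1 - β_n) v_n + β_n x_n^{-ω} = (1 - β_n (1 - s)) v_n`. The condition `σh(1 - s) ≥ 1` makes the
contraction `β_n (1 - s)` at least `1 / x_n`, and this pays for the passage from `x_n^{-ω}` to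
`(x_n + 1)^{-ω}`, since `1 - 1 / x ≤ x / (x + 1) ≤ (x / (x + 1))^ω` for `ω ≤ 1`.
-/

lemma sum_mul_prod_Ico_le_of_supersolution {R : Type*} [CommRing R] [PartialOrder R]
    [IsOrderedRing R] {b c v : ℕ → R} {m : ℕ} (hm : 0 ≤ v m)
    (hv : ∀ n ≥ m, c n * v n + b n ≤ v (n + 1)) (hc : ∀ n ≥ m, 0 ≤ c n) ⦃n : ℕ⦄ (hn : m ≤ n) :
    ∑ k ∈ Ico m n, b k * ∏ i ∈ Ico (k + 1) n, c i ≤ v n := by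
  have gronwall_neg : -v n ≤ -v m * ∏ i ∈ Ico m n, c i +
      ∑ k ∈ Ico m n, -b k * ∏ i ∈ Ico (k + 1) n, c i :=
    discrete_gronwall_prod_general (u := fun k ↦ -v k) (b := fun k ↦ -b k)
      (fun k hk ↦ by linear_combination hv k hk) hc hn
  have initial_nonneg : 0 ≤ v m * ∏ i ∈ Ico m n, c i :=
    mul_nonneg hm (prod_nonneg fun i hi ↦ hc i (mem_Ico.1 hi).1)
  simp only [neg_mul, sum_neg_distrib] at gronwall_neg
  linear_combination gronwall_neg + initial_nonneg

lemma one_sub_inv_mul_rpow_neg_le {x ω : ℝ} (hx : 0 < x) (hω : ω ≤ 1) :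
    (1 - x⁻¹) * x ^ (-ω) ≤ (x + 1) ^ (-ω) := by
  have hx' : 0 < x + 1 := by positivity
  have le_ratio : 1 - x⁻¹ ≤ x / (x + 1) := by
    rw [le_div_iff₀ hx']
    calc (1 - x⁻¹) * (x + 1) = x - x⁻¹ := by field_simp; ring
      _ ≤ x := sub_le_self x (by positivity)
  have ratio_le_rpow : x / (x + 1) ≤ (x / (x + 1)) ^ ω :=
    Real.self_le_rpow_of_le_one (by positivity) ((div_le_one hx').2 (by linarith)) hω
  calc (1 - x⁻¹) * x ^ (-ω) ≤ (x / (x + 1)) ^ ω * x ^ (-ω) := by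
        gcongr
        exact le_ratio.trans ratio_le_rpow
    _ = (x + 1) ^ (-ω) := by
        rw [Real.div_rpow hx.le hx'.le, Real.rpow_neg hx.le, Real.rpow_neg hx'.le]
        field_simp

lemma one_sub_mul_rpow_neg_div_add_le {x ω s β : ℝ} (hx : 0 < x) (hω : ω ≤ 1) (hs : 0 < s)
    (hβ : x⁻¹ ≤ β * (1 - s)) :
    (1 - β) * (x ^ (-ω) / s) + β * x ^ (-ω) ≤ (x + 1) ^ (-ω) / s :=
  calc (1 - β) * (x ^ (-ω) / s) + β * x ^ (-ω) = (1 - β * (1 - s)) * x ^ (-ω) / s := by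
        field_simp
        ring
    _ ≤ (1 - x⁻¹) * x ^ (-ω) / s := by gcongr
    _ ≤ (x + 1) ^ (-ω) / s := by
        gcongr
        exact one_sub_inv_mul_rpow_neg_le hx hω

lemma sum_mul_prod_one_sub_mul_rpow_neg_le {t₀ ω s : ℝ} {β : ℕ → ℝ} (ht₀ : 0 < t₀) (hω : ω ≤ 1)
    (hs : 0 < s) (hβ_le : ∀ k, β k ≤ 1) (hβ : ∀ k : ℕ, ((k : ℝ) + t₀)⁻¹ ≤ β k * (1 - s))
    {τ t : ℕ} (hτt : τ ≤ t) :
    ∑ k ∈ Icc τ t, (β k * ∏ ℓ ∈ Icc (k + 1) t, (1 - β ℓ)) * ((k : ℝ) + t₀) ^ (-ω) ≤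
      1 / (s * ((t : ℝ) + 1 + t₀) ^ ω) := by
  have supersolution (n : ℕ) : (1 - β n) * (((n : ℝ) + t₀) ^ (-ω) / s) +
      β n * ((n : ℝ) + t₀) ^ (-ω) ≤ (((n + 1 : ℕ) : ℝ) + t₀) ^ (-ω) / s := by
    rw [Nat.cast_succ, add_right_comm]
    exact one_sub_mul_rpow_neg_div_add_le (by positivity) hω hs (hβ n)
  calc ∑ k ∈ Icc τ t, (β k * ∏ ℓ ∈ Icc (k + 1) t, (1 - β ℓ)) * ((k : ℝ) + t₀) ^ (-ω)
      = ∑ k ∈ Ico τ (t + 1),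
          β k * ((k : ℝ) + t₀) ^ (-ω) * ∏ ℓ ∈ Ico (k + 1) (t + 1), (1 - β ℓ) := by
        simp only [Ico_add_one_right_eq_Icc, mul_right_comm]
    _ ≤ (((t + 1 : ℕ) : ℝ) + t₀) ^ (-ω) / s :=
        sum_mul_prod_Ico_le_of_supersolution (v := fun n : ℕ ↦ ((n : ℝ) + t₀) ^ (-ω) / s)
          (by positivity) (fun n _ ↦ supersolution n) (fun n _ ↦ sub_nonneg.2 (hβ_le n))
          (Nat.le_succ_of_le hτt)
    _ = 1 / (s * ((t : ℝ) + 1 + t₀) ^ ω) := by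
        rw [Nat.cast_succ, Real.rpow_neg (by positivity), inv_eq_one_div, div_div, mul_comm s]

theorem weighted_b_sum_bound_general {γ sg h t0 ω : ℝ} (hγ0 : 0 < γ) (hγ1 : γ < 1) (hh : 0 < h)
    (hcond : 1 ≤ sg * h * (1 - √γ)) (hht0 : h ≤ t0) {α : ℕ → ℝ}
    (hα : ∀ k, α k = h / ((k : ℝ) + t0)) {d : ℕ → ℝ} (hd : ∀ k, d k ∈ Set.Icc sg 1)
    (hω : ω ≤ 1) {τ t : ℕ} (hτt : τ ≤ t) :
    ∑ k ∈ Icc τ t, (α k * d k * ∏ ℓ ∈ Icc (k + 1) t, (1 - α ℓ * d ℓ)) * ((k : ℝ) + t0) ^ (-ω) ≤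
      1 / (√γ * ((t : ℝ) + 1 + t0) ^ ω) := by
  have ht0 : 0 < t0 := hh.trans_le hht0
  have sqrt_le_one : √γ ≤ 1 := Real.sqrt_le_one.2 hγ1.le
  have α_nonneg (k : ℕ) : 0 ≤ α k := by rw [hα]; positivity
  have α_le_one (k : ℕ) : α k ≤ 1 := by
    rw [hα, div_le_one (by positivity)]
    exact hht0.trans (le_add_of_nonneg_left k.cast_nonneg)
  have β_le_one (k : ℕ) : α k * d k ≤ 1 :=
    (mul_le_of_le_one_right (α_nonneg k) (hd k).2).trans (α_le_one k)
  have inv_le_contraction (k : ℕ) : ((k : ℝ) + t0)⁻¹ ≤ α k * d k * (1 - √γ) :=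
    calc ((k : ℝ) + t0)⁻¹ ≤ sg * h * (1 - √γ) * ((k : ℝ) + t0)⁻¹ :=
          le_mul_of_one_le_left (by positivity) hcond
      _ = α k * sg * (1 - √γ) := by rw [hα]; ring
      _ ≤ α k * d k * (1 - √γ) :=
          mul_le_mul_of_nonneg_right (mul_le_mul_of_nonneg_left (hd k).1 (α_nonneg k))
            (sub_nonneg.2 sqrt_le_one)
  exact sum_mul_prod_one_sub_mul_rpow_neg_le ht0 hω (Real.sqrt_pos.2 hγ0) β_le_one
    inv_le_contraction hτt

/-- **Lemma 8.** For rescaled linear step sizes `α_k = h/(k+t₀)` with `σh(1-√γ) ≥ 1`,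
`t₀ ≥ 1`, `h/t₀ ≤ 1/2`, any sequence `d_k ∈ [σ,1]`, and
`b_{k,t} = α_k d_k ∏_{ℓ=k+1}^t (1-α_ℓ d_ℓ)`, one has, for every `0 < ω ≤ 1` and
`0 ≤ τ ≤ t`, `Σ_{k=τ}^t b_{k,t} (k+t₀)^{-ω} ≤ 1/(√γ (t+1+t₀)^ω)`. -/
theorem weighted_b_sum_bound
    (γ sg : ℝ) (hγ0 : 0 < γ) (hγ1 : γ < 1) (hsg0 : 0 < sg) (hsg1 : sg < 1)
    (h t0 : ℝ) (hh : 0 < h) (hcond : 1 ≤ sg * h * (1 - Real.sqrt γ))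
    (ht0 : 1 ≤ t0) (hα0 : h / t0 ≤ 1 / 2)
    (α : ℕ → ℝ) (hα : ∀ k, α k = h / ((k : ℝ) + t0))
    (d : ℕ → ℝ) (hd : ∀ k, d k ∈ Set.Icc sg 1) :
    ∀ (ω : ℝ), 0 < ω → ω ≤ 1 → ∀ τ t : ℕ, τ ≤ t →
      ∑ k ∈ Finset.Icc τ t,
          (α k * d k * ∏ ℓ ∈ Finset.Icc (k + 1) t, (1 - α ℓ * d ℓ)) *
            ((k : ℝ) + t0) ^ (-ω) ≤
        1 / (Real.sqrt γ * ((t : ℝ) + 1 + t0) ^ ω) := fun _ _ hω _ _ hτt ↦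
  weighted_b_sum_bound_general hγ0 hγ1 hh hcond
    (by linarith [(div_le_iff₀ (zero_lt_one.trans_le ht0)).1 hα0]) hα hd hω hτt
end
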